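/- arXiv:2504.05091 — 2 statements merged into one kernel-verified Lean document; each statement's English description precedes it below -/
import Mathlib

section
/- Let n ≥ 1, let C₁, C₂, C₃ > 0, and let ξ ≥ 8C₂²/C₁ + C₃. Let P : ℝ → Mat(n×n, ℝ) be continuously differentiable and Q : ℝ → Mat(n×n, ℝ) continuously differentiable, R : ℝ → Mat(n×n, ℝ) continuous, with ⟨P(t)v, v⟩ ≥ C₁‖v‖² for all t, v, ‖Q(t)‖ ≤ C₂ and ‖R(t)‖ ≤ C₃ for all t. Suppose w : ℝ → ℝⁿ is twice differentiable, w and w' are square-integrable on ℝ, w(t) → 0 and w'(t) → 0 as t → ±∞, and w satisfies the equation −d/dt(P(t)w'(t) + Q(t)w(t)) + Q(t)ᵀw'(t) + R(t)w(t) + ξ·w(t) = 0 for every t ∈ ℝ. Then w is identically zero. -/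
open MeasureTheory Matrix Filter
open scoped RealInnerProductSpace

attribute [local instance] Matrix.normedAddCommGroup Matrix.normedSpace

/-- The action of a real `n × n` matrix on `EuclideanSpace ℝ (Fin n)`. -/
noncomputable def mvE {n : ℕ} (A : Matrix (Fin n) (Fin n) ℝ)
    (v : EuclideanSpace ℝ (Fin n)) : EuclideanSpace ℝ (Fin n) :=
  Matrix.toEuclideanLin A v

/-- The (ℓ²-)operator norm of a real `n × n` matrix. -/
noncomputable def matOpNorm {n : ℕ} (A : Matrix (Fin n) (Fin n) ℝ) : ℝ :=
  ‖LinearMap.toContinuousLinearMap (Matrix.toEuclideanLin A)‖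

lemma key_nonint {E : Type*} [NormedAddCommGroup E] [NormedSpace ℝ E]
    (u u' w : ℝ → E) (h : ℝ → ℝ) (hc : Continuous h) (hi : Integrable h)
    (hu : ∀ t, HasDerivAt u (u' t) t) (K : ℝ) (hK : 0 ≤ K)
    (hu' : ∀ t, ‖u' t‖ ^ 2 ≤ K * h t) (hwh : ∀ t, ‖w t‖ ^ 2 ≤ h t)
    (δ : ℝ) (hδ : 0 < δ) (T : ℝ) (hT : ∀ t, T ≤ t → δ ≤ ‖u t‖ * ‖w t‖) : False := by
  have h0 : ∀ t, 0 ≤ h t := fun t => (sq_nonneg _).trans (hwh t)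
  set M := ∫ t, h t with hM
  have hM0 : 0 ≤ M := integral_nonneg h0
  have hE : ∀ t, HasDerivAt (fun t => ∫ s in T..t, h s) (h t) t := fun t =>
    intervalIntegral.integral_hasDerivAt_right (hc.intervalIntegrable _ _)
      (hc.stronglyMeasurableAtFilter _ _) hc.continuousAt
  have hEM : ∀ t, T ≤ t → (∫ s in T..t, h s) ≤ M := fun t ht => by
    rw [intervalIntegral.integral_of_le ht]
    exact setIntegral_le_integral hi (Eventually.of_forall h0)
  have hub : ∀ t, T ≤ t → ‖u t‖ ≤ ‖u T‖ + (K * M + 1) * √(t - T) := by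
    intro t ht
    rcases ht.eq_or_lt with rfl | ht'
    · simp
    set ε := √(t - T) with hε
    have hε0 : 0 < ε := Real.sqrt_pos.2 (by linarith)
    have hε2 : ε * ε = t - T := Real.mul_self_sqrt (by linarith)
    have := image_norm_le_of_norm_deriv_right_le_deriv_boundary (f := u) (f' := u') (a := T) (b := t)
      (B := fun s => ‖u T‖ + (ε * K * (∫ r in T..s, h r) + ε⁻¹ * (s - T)))
      (B' := fun s => ε * K * h s + ε⁻¹)
      (fun s _ => (hu s).continuousAt.continuousWithinAt)
      (fun s _ => (hu s).hasDerivWithinAt) (by simp)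
      (fun s => by
        have := (((hE s).const_mul (ε * K)).add
          (((hasDerivAt_id s).sub_const T).const_mul ε⁻¹)).const_add ‖u T‖
        simpa using this)
      (fun s _ => by
        have h1 := hu' s
        have h2 : ε * ‖u' s‖ ^ 2 ≤ ε * (K * h s) := by gcongr
        have h3 : ε * ε⁻¹ = 1 := mul_inv_cancel₀ hε0.ne'
        have h4 : 0 ≤ ε⁻¹ := by positivity
        have h5 : 0 ≤ ε⁻¹ * (ε * ‖u' s‖ - 1) ^ 2 := by positivity
        have h6 : ε⁻¹ * (ε * ‖u' s‖ - 1) ^ 2 = ε * ‖u' s‖ ^ 2 - 2 * ‖u' s‖ + ε⁻¹ := by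
          field_simp
          ring
        have := norm_nonneg (u' s)
        show _ ≤ ε * K * h s + ε⁻¹
        linarith)
      (Set.right_mem_Icc.2 ht)
    have h7 : ε⁻¹ * (t - T) = ε := by rw [← hε2]; field_simp
    have h8 : ε * K * (∫ r in T..t, h r) ≤ ε * K * M := by
      gcongr
      exact hEM t ht
    simp only [h7] at this
    linarith
  set b := K * M + 1 with hb
  set A := 2 * ‖u T‖ ^ 2 + 2 * b ^ 2 + 1 with hA
  have hA0 : 0 < A := by positivity
  have hlow : ∀ t, T < t → δ ^ 2 / A * (1 + (t - T))⁻¹ ≤ h t := by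
    intro t ht
    have h1 := hub t ht.le
    have h2 := hT t ht.le
    have h3 : √(t - T) ^ 2 = t - T := Real.sq_sqrt (by linarith)
    have h4 : ‖u t‖ ^ 2 ≤ A * (1 + (t - T)) := by
      have : ‖u t‖ ^ 2 ≤ (‖u T‖ + b * √(t - T)) ^ 2 := by gcongr
      have h5 : (‖u T‖ + b * √(t - T)) ^ 2 ≤ 2 * ‖u T‖ ^ 2 + 2 * (b ^ 2 * (t - T)) := by
        have h7 : b ^ 2 * √(t - T) ^ 2 = b ^ 2 * (t - T) := by rw [h3]
        nlinarith [sq_nonneg (‖u T‖ - b * √(t - T))]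
      have h6 : 0 ≤ ‖u T‖ ^ 2 * (t - T) := mul_nonneg (sq_nonneg _) (by linarith)
      nlinarith [sq_nonneg b]
    have h5 : δ ^ 2 ≤ ‖u t‖ ^ 2 * ‖w t‖ ^ 2 := by
      rw [← mul_pow]; gcongr
    have h6 : δ ^ 2 ≤ (A * (1 + (t - T))) * h t := by
      refine h5.trans ?_
      gcongr
      exact hwh t
    have h7 : 0 < 1 + (t - T) := by linarith
    rw [div_mul_eq_mul_div, div_le_iff₀ hA0, ← div_eq_mul_inv, div_le_iff₀ h7]
    linarith
  set κ := δ ^ 2 / A with hκ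
  have hκ0 : 0 < κ := by positivity
  have hF : ∀ t, T ≤ t → HasDerivAt (fun t => (∫ s in T..t, h s) - κ * Real.log (1 + (t - T)))
      (h t - κ * (1 + (t - T))⁻¹) t := by
    intro t ht
    have h1 : HasDerivAt (fun t => 1 + (t - T)) 1 t :=
      ((hasDerivAt_id t).sub_const T).const_add 1
    have h2 := (h1.log (by linarith)).const_mul κ
    have h3 := (hE t).fun_sub h2
    rwa [one_div] at h3
  have hmono : MonotoneOn (fun t => (∫ s in T..t, h s) - κ * Real.log (1 + (t - T)))
      (Set.Ici T) := by
    apply monotoneOn_of_deriv_nonneg (convex_Ici T)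
    · exact fun t ht => (hF t ht).continuousAt.continuousWithinAt
    · intro t ht
      rw [interior_Ici] at ht
      exact (hF t (le_of_lt ht)).differentiableAt.differentiableWithinAt
    · intro t ht
      rw [interior_Ici] at ht
      rw [(hF t (le_of_lt ht)).deriv]
      linarith [hlow t ht]
  have hx : 0 ≤ (M + 1) / κ := by positivity
  have htT : T ≤ T + (Real.exp ((M + 1) / κ) - 1) := by
    have := Real.add_one_le_exp ((M + 1) / κ)
    linarith
  have h9 := hmono (Set.self_mem_Ici) (Set.mem_Ici.2 htT) htT
  have h10 := hEM _ htT
  have h11 : (1 : ℝ) + (T + (Real.exp ((M + 1) / κ) - 1) - T) = Real.exp ((M + 1) / κ) := by ring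
  simp only [h11, Real.log_exp, intervalIntegral.integral_same, sub_self, add_zero, Real.log_one,
    mul_zero] at h9
  rw [mul_div_cancel₀ _ hκ0.ne'] at h9
  linarith

lemma mvE_diff {n : ℕ} {P : ℝ → Matrix (Fin n) (Fin n) ℝ} (hP : ContDiff ℝ 1 P)
    {v : ℝ → EuclideanSpace ℝ (Fin n)} (hv : Differentiable ℝ v) :
    Differentiable ℝ (fun s => mvE (P s) (v s)) := by
  have hPd : Differentiable ℝ P := hP.differentiable one_ne_zero
  have hPij : ∀ i j, Differentiable ℝ (fun s => P s i j) := fun i j =>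
    differentiable_pi.1 (differentiable_pi.1 hPd i) j
  rw [differentiable_euclidean] at hv ⊢
  intro i
  have : (fun s => (mvE (P s) (v s)) i) = fun s => ∑ j, P s i j * v s j := by
    ext s
    simp [mvE, Matrix.toLpLin_apply, Matrix.mulVec, dotProduct]
  rw [this]
  exact Differentiable.fun_sum fun j _ => (hPij i j).mul (hv j)

lemma mvE_norm {n : ℕ} (A : Matrix (Fin n) (Fin n) ℝ) (v : EuclideanSpace ℝ (Fin n)) (C : ℝ)
    (h : matOpNorm A ≤ C) : ‖mvE A v‖ ≤ C * ‖v‖ :=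
  ((LinearMap.toContinuousLinearMap (Matrix.toEuclideanLin A)).le_opNorm v).trans
    (mul_le_mul_of_nonneg_right h (norm_nonneg _))

lemma mvE_transpose {n : ℕ} (A : Matrix (Fin n) (Fin n) ℝ) (v z : EuclideanSpace ℝ (Fin n)) :
    ⟪mvE Aᵀ v, z⟫ = ⟪v, mvE A z⟫ := by
  have : Aᵀ = Aᴴ := by ext; simp
  rw [mvE, mvE, this, Matrix.toEuclideanLin_conjTranspose_eq_adjoint, LinearMap.adjoint_inner_left]

lemma mvE_transpose_norm {n : ℕ} (A : Matrix (Fin n) (Fin n) ℝ) (v : EuclideanSpace ℝ (Fin n))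
    (C : ℝ) (hC : 0 ≤ C) (h : matOpNorm A ≤ C) : ‖mvE Aᵀ v‖ ≤ C * ‖v‖ := by
  rcases (norm_nonneg (mvE Aᵀ v)).eq_or_lt with h0 | h0
  · rw [← h0]; positivity
  have h1 := mvE_transpose A v (mvE Aᵀ v)
  have h2 := real_inner_le_norm v (mvE A (mvE Aᵀ v))
  have h3 := mvE_norm A (mvE Aᵀ v) C h
  rw [real_inner_self_eq_norm_sq] at h1
  have h4 : ‖v‖ * ‖mvE A (mvE Aᵀ v)‖ ≤ ‖v‖ * (C * ‖mvE Aᵀ v‖) := by gcongr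
  nlinarith

theorem stmt1 {n : ℕ} (hn : 1 ≤ n) (C₁ C₂ C₃ : ℝ) (hC₁ : 0 < C₁) (hC₂ : 0 < C₂)
    (hC₃ : 0 < C₃) (ξ : ℝ) (hξ : 8 * C₂ ^ 2 / C₁ + C₃ ≤ ξ)
    (P Q R : ℝ → Matrix (Fin n) (Fin n) ℝ)
    (hPc : ContDiff ℝ 1 P) (hQc : ContDiff ℝ 1 Q) (hRc : Continuous R)
    (hP : ∀ t : ℝ, ∀ v : EuclideanSpace ℝ (Fin n), C₁ * ‖v‖ ^ 2 ≤ ⟪mvE (P t) v, v⟫)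
    (hQ : ∀ t : ℝ, matOpNorm (Q t) ≤ C₂) (hR : ∀ t : ℝ, matOpNorm (R t) ≤ C₃)
    (w : ℝ → EuclideanSpace ℝ (Fin n))
    (hw : Differentiable ℝ w) (hw' : Differentiable ℝ (deriv w))
    (hw2 : Integrable (fun t => ‖w t‖ ^ 2))
    (hw'2 : Integrable (fun t => ‖deriv w t‖ ^ 2))
    (hwtop : Tendsto w atTop (nhds 0)) (hwbot : Tendsto w atBot (nhds 0))
    (hw'top : Tendsto (deriv w) atTop (nhds 0)) (hw'bot : Tendsto (deriv w) atBot (nhds 0))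
    (heq : ∀ t : ℝ,
      -deriv (fun s => mvE (P s) (deriv w s) + mvE (Q s) (w s)) t +
        mvE (Q t)ᵀ (deriv w t) + mvE (R t) (w t) + ξ • w t = 0) :
    ∀ t : ℝ, w t = 0 := by
  set u : ℝ → EuclideanSpace ℝ (Fin n) :=
    fun s => mvE (P s) (deriv w s) + mvE (Q s) (w s) with hu_def
  set u' : ℝ → EuclideanSpace ℝ (Fin n) :=
    fun t => mvE (Q t)ᵀ (deriv w t) + mvE (R t) (w t) + ξ • w t with hu'_def
  have hud : Differentiable ℝ u := (mvE_diff hPc hw').add (mvE_diff hQc hw)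
  have hu : ∀ t, HasDerivAt u (u' t) t := by
    intro t
    have h1 := (hud t).hasDerivAt
    have h2 : deriv u t = u' t := by
      have h3 := heq t
      rw [add_assoc, add_assoc, neg_add_eq_zero] at h3
      rw [h3, hu'_def]
      simp only [add_assoc]
    rwa [h2] at h1
  set h : ℝ → ℝ := fun t => ‖w t‖ ^ 2 + ‖deriv w t‖ ^ 2 with hh
  have hc : Continuous h := (hw.continuous.norm.pow 2).add (hw'.continuous.norm.pow 2)
  have hi : Integrable h := hw2.add hw'2
  have hwh : ∀ t, ‖w t‖ ^ 2 ≤ h t := fun t => le_add_of_nonneg_right (sq_nonneg _)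
  set D := C₃ + |ξ| with hD
  have hu'b : ∀ t, ‖u' t‖ ^ 2 ≤ (2 * (C₂ ^ 2 + D ^ 2)) * h t := by
    intro t
    have h1 : ‖u' t‖ ≤ C₂ * ‖deriv w t‖ + D * ‖w t‖ := by
      have := norm_add₃_le (a := mvE (Q t)ᵀ (deriv w t)) (b := mvE (R t) (w t)) (c := ξ • w t)
      have a1 := mvE_transpose_norm (Q t) (deriv w t) C₂ hC₂.le (hQ t)
      have a2 := mvE_norm (R t) (w t) C₃ (hR t)
      rw [norm_smul, Real.norm_eq_abs] at this
      simp only [hu'_def, hD]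
      linarith
    have h2 : ‖u' t‖ ^ 2 ≤ (C₂ * ‖deriv w t‖ + D * ‖w t‖) ^ 2 := by gcongr
    simp only [hh]
    nlinarith [sq_nonneg (C₂ * ‖deriv w t‖ - D * ‖w t‖), sq_nonneg (C₂ * ‖w t‖),
      sq_nonneg (D * ‖deriv w t‖)]
  have hf : ∀ t, HasDerivAt (fun t => ⟪u t, w t⟫) (⟪u t, deriv w t⟫ + ⟪u' t, w t⟫) t :=
    fun t => (hu t).inner ℝ (hw t).hasDerivAt
  have hf' : ∀ t, 7 * (C₂ ^ 2 / C₁) * ‖w t‖ ^ 2 ≤ ⟪u t, deriv w t⟫ + ⟪u' t, w t⟫ := by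
    intro t
    simp only [hu_def, hu'_def, inner_add_left, mvE_transpose, real_inner_smul_left,
      real_inner_self_eq_norm_sq]
    have a1 := hP t (deriv w t)
    have a2 := abs_le.1 (abs_real_inner_le_norm (mvE (Q t) (w t)) (deriv w t))
    have a3 := abs_le.1 (abs_real_inner_le_norm (mvE (R t) (w t)) (w t))
    have a4 : ‖mvE (Q t) (w t)‖ * ‖deriv w t‖ ≤ C₂ * ‖w t‖ * ‖deriv w t‖ := by
      gcongr; exact mvE_norm _ _ _ (hQ t)
    have a5 : ‖mvE (R t) (w t)‖ * ‖w t‖ ≤ C₃ * ‖w t‖ * ‖w t‖ := by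
      gcongr; exact mvE_norm _ _ _ (hR t)
    have a6 := real_inner_comm (deriv w t) (mvE (Q t) (w t))
    have a7 : (8 * C₂ ^ 2 / C₁ + C₃) * ‖w t‖ ^ 2 ≤ ξ * ‖w t‖ ^ 2 := by gcongr
    have a8 : 0 ≤ C₁ * (‖deriv w t‖ - C₂ / C₁ * ‖w t‖) ^ 2 := by positivity
    have a9 : C₁ * (‖deriv w t‖ - C₂ / C₁ * ‖w t‖) ^ 2 =
        C₁ * ‖deriv w t‖ ^ 2 - 2 * (C₂ * ‖w t‖ * ‖deriv w t‖) + C₂ ^ 2 / C₁ * ‖w t‖ ^ 2 := by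
      field_simp
      ring
    have a10 : (8 * C₂ ^ 2 / C₁ + C₃) * ‖w t‖ ^ 2 =
      8 * (C₂ ^ 2 / C₁ * ‖w t‖ ^ 2) + C₃ * ‖w t‖ * ‖w t‖ := by ring
    linarith [a2.1, a3.1]
  have hmono : Monotone (fun t => ⟪u t, w t⟫) := by
    apply monotone_of_deriv_nonneg (fun t => (hf t).differentiableAt)
    intro t
    rw [(hf t).deriv]
    exact le_trans (by positivity) (hf' t)
  have hle : ∀ t, ⟪u t, w t⟫ ≤ 0 := by
    intro T
    by_contra! hT
    exact key_nonint u u' w h hc hi hu _ (by positivity) hu'b hwh _ hT T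
      (fun t ht => (hmono ht).trans (real_inner_le_norm _ _))
  have hge : ∀ t, 0 ≤ ⟪u t, w t⟫ := by
    intro T
    by_contra! hT
    refine key_nonint (fun t => u (-t)) (fun t => -u' (-t)) (fun t => w (-t)) (fun t => h (-t))
      (hc.comp continuous_neg) hi.comp_neg (fun t => ?_) (2 * (C₂ ^ 2 + D ^ 2)) (by positivity)
      (fun t => by simpa using hu'b (-t)) (fun t => hwh (-t)) (-⟪u T, w T⟫) (by linarith) (-T)
      (fun t ht => ?_)
    · simpa [Function.comp_def] using (hu (-t)).scomp t (hasDerivAt_neg t)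
    · have h1 : ⟪u (-t), w (-t)⟫ ≤ ⟪u T, w T⟫ := hmono (by linarith : -t ≤ T)
      have h2 := (abs_le.1 (abs_real_inner_le_norm (u (-t)) (w (-t)))).1
      linarith
  intro t
  have hz : (fun t => ⟪u t, w t⟫) = fun _ => (0 : ℝ) := funext fun t => le_antisymm (hle t) (hge t)
  have h1 := (hf t).deriv
  rw [hz, deriv_const] at h1
  have h2 := hf' t
  rw [← h1] at h2
  have h3 : 0 < 7 * (C₂ ^ 2 / C₁) := by positivity
  have h4 : ‖w t‖ ^ 2 ≤ 0 := by
    by_contra! h5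
    linarith [mul_pos h3 h5]
  have h5 : ‖w t‖ = 0 := by
    have := sq_nonneg ‖w t‖
    exact pow_eq_zero_iff two_ne_zero |>.1 (le_antisymm h4 this)
  exact norm_eq_zero.1 h5
end

section
/- Let n ≥ 1 and let P, Q, R be n×n real matrices with P and R symmetric, such that the 2n×2n block matrix [[P, Q], [Qᵀ, R]] is positive definite. Then P is invertible, and, with B the Hamiltonian coefficient matrix built from P, Q, R, the matrix JB is hyperbolic: every eigenvalue μ ∈ ℂ of the complexification of JB satisfies Re μ ≠ 0. -/
open Matrix

/-- The standard symplectic matrix `J = [[0, -I], [I, 0]]` on `ℝ^{2n}`. -/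
def Jmat (n : ℕ) : Matrix (Fin n ⊕ Fin n) (Fin n ⊕ Fin n) ℝ :=
  Matrix.fromBlocks 0 (-1) 1 0

/-- The Hamiltonian coefficient matrix
`B = [[P⁻¹, -P⁻¹Q], [-QᵀP⁻¹, QᵀP⁻¹Q - R]]` built from `P, Q, R`. -/
noncomputable def hamB {n : ℕ} (P Q R : Matrix (Fin n) (Fin n) ℝ) :
    Matrix (Fin n ⊕ Fin n) (Fin n ⊕ Fin n) ℝ :=
  Matrix.fromBlocks P⁻¹ (-(P⁻¹ * Q)) (-(Qᵀ * P⁻¹)) (Qᵀ * P⁻¹ * Q - R)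

/-- `P` is positive definite as a principal block. -/
lemma aux_isUnit {n : ℕ} (P Q R : Matrix (Fin n) (Fin n) ℝ)
    (hpos : (Matrix.fromBlocks P Q Qᵀ R).PosDef) : IsUnit P.det := by
  have h : P.PosDef := hpos.submatrix (e := Sum.inl) Sum.inl_injective
  exact h.det_pos.ne'.isUnit

/-- If `JB (x, y) = (p, q)` then the block matrix maps `(q, y)` to `(x, p)`. -/
lemma aux_block {n : ℕ} (P Q R : Matrix (Fin n) (Fin n) ℝ) (hP : IsUnit P.det)
    (x y p q : Fin n → ℝ)
    (h : (Jmat n * hamB P Q R) *ᵥ Sum.elim x y = Sum.elim p q) :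
    Matrix.fromBlocks P Q Qᵀ R *ᵥ Sum.elim q y = Sum.elim x p := by
  rw [Jmat, hamB, fromBlocks_multiply, fromBlocks_mulVec] at h
  rw [fromBlocks_mulVec]
  have h1 := congrArg (fun f => f ∘ Sum.inl) h
  have h2 := congrArg (fun f => f ∘ Sum.inr) h
  simp only [Sum.elim_comp_inl, Sum.elim_comp_inr, zero_mul, one_mul, neg_mul, zero_add, add_zero,
    neg_neg] at h1 h2 ⊢
  have e : P *ᵥ q + Q *ᵥ y = x := by
    rw [← h2, mulVec_add, mulVec_mulVec, mulVec_mulVec, mul_neg, ← Matrix.mul_assoc,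
      Matrix.mul_nonsing_inv _ hP, one_mulVec, one_mul, neg_mulVec]
    abel
  have e' : Qᵀ *ᵥ q + R *ᵥ y = p := by
    rw [← h1, ← h2, mulVec_add, mulVec_mulVec, mulVec_mulVec, mul_neg, neg_mulVec, neg_mulVec,
      sub_mulVec, Matrix.mul_assoc]
    abel
  rw [e, e']

theorem stmt2 {n : ℕ} (hn : 1 ≤ n) (P Q R : Matrix (Fin n) (Fin n) ℝ)
    (hPsymm : P.IsSymm) (hRsymm : R.IsSymm)
    (hpos : (Matrix.fromBlocks P Q Qᵀ R).PosDef) :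
    IsUnit P.det ∧
      ∀ μ : ℂ, μ ∈ spectrum ℂ ((Jmat n * hamB P Q R).map (Complex.ofReal)) →
        μ.re ≠ 0 := by
  have hP := aux_isUnit P Q R hpos
  refine ⟨hP, fun μ hμ hre => ?_⟩
  set A := Jmat n * hamB P Q R with hA
  rw [← Matrix.spectrum_toLin', ← Module.End.hasEigenvalue_iff_mem_spectrum] at hμ
  obtain ⟨v, hv⟩ := hμ.exists_hasEigenvector
  have hv0 := hv.2
  have hev : A.map Complex.ofReal *ᵥ v = μ • v := by simpa using hv.apply_eq_smul
  have key : ∀ i, (A *ᵥ fun j => (v j).re) i = - μ.im * (v i).im ∧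
      (A *ᵥ fun j => (v j).im) i = μ.im * (v i).re := by
    intro i
    have := congrFun hev i
    have hr := congrArg Complex.re this
    have hi := congrArg Complex.im this
    simp [mulVec, dotProduct, hre] at hr hi ⊢
    exact ⟨hr, hi⟩
  set t := μ.im
  set x₁ : Fin n → ℝ := fun j => (v (Sum.inl j)).re with hx₁
  set y₁ : Fin n → ℝ := fun j => (v (Sum.inr j)).re with hy₁
  set x₂ : Fin n → ℝ := fun j => (v (Sum.inl j)).im with hx₂
  set y₂ : Fin n → ℝ := fun j => (v (Sum.inr j)).im with hy₂
  have e1 : (fun j => (v j).re) = Sum.elim x₁ y₁ := by ext (j | j) <;> rfl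
  have e2 : (fun j => (v j).im) = Sum.elim x₂ y₂ := by ext (j | j) <;> rfl
  rw [e1, e2] at key
  have k1 : A *ᵥ Sum.elim x₁ y₁ = Sum.elim (-t • x₂) (-t • y₂) := by
    ext (j | j) <;> simp [(key _).1, x₂, y₂]
  have k2 : A *ᵥ Sum.elim x₂ y₂ = Sum.elim (t • x₁) (t • y₁) := by
    ext (j | j) <;> simp [(key _).2, x₁, y₁]
  have m1 := aux_block P Q R hP _ _ _ _ k1
  have m2 := aux_block P Q R hP _ _ _ _ k2
  have s : Sum.elim (-t • y₂) y₁ ⬝ᵥ (Matrix.fromBlocks P Q Qᵀ R *ᵥ Sum.elim (-t • y₂) y₁) +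
      Sum.elim (t • y₁) y₂ ⬝ᵥ (Matrix.fromBlocks P Q Qᵀ R *ᵥ Sum.elim (t • y₁) y₂) = 0 := by
    rw [m1, m2]
    simp only [sumElim_dotProduct_sumElim, smul_dotProduct, dotProduct_smul, smul_eq_mul]
    ring
  have nn : ∀ u : Fin n ⊕ Fin n → ℝ, 0 ≤ u ⬝ᵥ (Matrix.fromBlocks P Q Qᵀ R *ᵥ u) := fun u => by
    simpa using hpos.posSemidef.dotProduct_mulVec_nonneg u
  have zz : ∀ u : Fin n ⊕ Fin n → ℝ, u ⬝ᵥ (Matrix.fromBlocks P Q Qᵀ R *ᵥ u) = 0 → u = 0 := by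
    intro u hu
    by_contra h
    have := hpos.dotProduct_mulVec_pos h
    simp [hu] at this
  have u1 := zz (Sum.elim (-t • y₂) y₁) (by linarith [nn (Sum.elim (-t • y₂) y₁), nn (Sum.elim (t • y₁) y₂)])
  have u2 := zz (Sum.elim (t • y₁) y₂) (by linarith [nn (Sum.elim (-t • y₂) y₁), nn (Sum.elim (t • y₁) y₂)])
  rw [u1, mulVec_zero] at m1
  rw [u2, mulVec_zero] at m2
  apply hv0
  ext (j | j)
  · exact Complex.ext (congrFun m1 (Sum.inl j)).symm (congrFun m2 (Sum.inl j)).symm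
  · exact Complex.ext (congrFun u1 (Sum.inr j)) (congrFun u2 (Sum.inr j))
end
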